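/- arXiv:2404.18690 — 3 statements merged into one kernel-verified Lean document; each statement's English description precedes it below -/
import Mathlib

section
/- Let f(x,y) = cos x · cos y · cos(x−y). Then f(x,y) ≥ −1/8 for all (x,y) ∈ ℝ², and for (x,y) in the region Δ = (−π,π] × (−π,π], equality f(x,y) = −1/8 holds exactly at the eight points (−2π/3, 2π/3), (−π/3, π/3), (π/3, −π/3), (2π/3, −2π/3), (2π/3, π/3), (π/3, 2π/3), (−2π/3, −π/3), (−π/3, −2π/3). -/
open MeasureTheory Filter Finset Real
open scoped ENNReal NNReal

noncomputable section

/-- `P n = p 1 * p 2 * ⋯ * p n`. -/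
def Pprod (p : ℕ → ℕ) (n : ℕ) : ℕ := ∏ i ∈ Finset.Icc 1 n, p i

/-- The uniform probability measure on the finite set `s • E ⊆ ℝ`. -/
def unifD (E : Finset ℕ) (s : ℝ) : Measure ℝ :=
  (E.card : ℝ≥0∞)⁻¹ • ∑ d ∈ E, Measure.dirac (s * (d : ℝ))

/-- The finite convolutions `μ_n = δ_{P₁⁻¹D₁} ∗ ⋯ ∗ δ_{Pₙ⁻¹Dₙ}`. -/
def muN (p : ℕ → ℕ) (D : ℕ → Finset ℕ) : ℕ → Measure ℝ
  | 0 => Measure.dirac 0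
  | n + 1 => Measure.conv (muN p D n) (unifD (D (n + 1)) ((Pprod p (n + 1) : ℝ)⁻¹))

/-- `μ` is the weak limit of the sequence of measures `ν n`. -/
def IsWeakLimit (ν : ℕ → Measure ℝ) (μ : Measure ℝ) : Prop :=
  ∀ f : BoundedContinuousFunction ℝ ℝ,
    Tendsto (fun n => ∫ x, f x ∂ν n) atTop (nhds (∫ x, f x ∂μ))

/-- `μ` is the Moran measure attached to `(p, D)`: the infinite convolution
`δ_{P₁⁻¹D₁} ∗ δ_{P₂⁻¹D₂} ∗ ⋯`, in the sense of weak convergence. -/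
def IsMoran (p : ℕ → ℕ) (D : ℕ → Finset ℕ) (μ : Measure ℝ) : Prop :=
  IsProbabilityMeasure μ ∧ IsWeakLimit (muN p D) μ

/-- The exponentials `e_λ, λ ∈ Λ` are pairwise orthogonal in `L²(μ)`. -/
def IsOrthSet (μ : Measure ℝ) (Λ : Set ℝ) : Prop :=
  ∀ l ∈ Λ, ∀ l' ∈ Λ, l ≠ l' →
    ∫ x : ℝ, Complex.exp (2 * Real.pi * Complex.I * (l - l') * x) ∂μ = 0

/-- `Λ` is a spectrum of `μ`: the exponentials `e_λ, λ ∈ Λ` form an orthonormal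
basis of `L²(μ)` (orthonormal + maximal, i.e. complete). -/
def IsSpectrum (μ : Measure ℝ) (Λ : Set ℝ) : Prop :=
  IsOrthSet μ Λ ∧
  ∀ f : ℝ → ℂ, MemLp f 2 μ →
    (∀ l ∈ Λ, ∫ x : ℝ, f x * Complex.exp (-(2 * Real.pi * Complex.I * l * x)) ∂μ = 0) →
    f =ᵐ[μ] 0

def IsSpectralMeasure (μ : Measure ℝ) : Prop := ∃ Λ : Set ℝ, Λ.Countable ∧ IsSpectrum μ Λ

/-- Condition (T1): `D n = {0,1,…,N-1}` with `3 < N`, `N ∣ p n`, `N < p n`. -/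
def T1cond (p : ℕ → ℕ) (D : ℕ → Finset ℕ) (n : ℕ) : Prop :=
  ∃ N : ℕ, 3 < N ∧ N ∣ p n ∧ N < p n ∧ D n = Finset.range N

/-- Condition (T2) (except for the global sup condition): `D n = {0,a,b}`,
`0 < a < b`, `gcd(a,b) = 1`, `{a,b} ≡ {1,2} (mod 3)`, `3 ∣ p n`. -/
def T2cond (p : ℕ → ℕ) (D : ℕ → Finset ℕ) (n : ℕ) : Prop :=
  ∃ a b : ℕ, 0 < a ∧ a < b ∧ Nat.gcd a b = 1 ∧
    (a % 3 = 1 ∧ b % 3 = 2 ∨ a % 3 = 2 ∧ b % 3 = 1) ∧ 3 ∣ p n ∧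
    D n = ({0, a, b} : Finset ℕ)

/-- Condition (T3): `D n = {0,d}` with `0 < d < p n` and `p n / gcd (d, p n)` even.
(The decomposition `d = 2^l d'` with `d'` odd always exists, with `l` the 2-adic
valuation of `d`.) -/
def T3cond (p : ℕ → ℕ) (D : ℕ → Finset ℕ) (n : ℕ) : Prop :=
  ∃ d : ℕ, 0 < d ∧ d < p n ∧ 2 ∣ p n / Nat.gcd d (p n) ∧ D n = ({0, d} : Finset ℕ)

/-- The pair `(p, D)` satisfies conditions (T1)–(T3), including the requirement
`sup {b n / p n : n of type (T2)} < 2/3`. -/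
def SatisfiesT (p : ℕ → ℕ) (D : ℕ → Finset ℕ) : Prop :=
  (∀ n, 1 ≤ n → T1cond p D n ∨ T2cond p D n ∨ T3cond p D n) ∧
  ∃ c : ℝ, c < 2 / 3 ∧ ∀ n, 1 ≤ n → T2cond p D n → (((D n).sup id : ℕ) : ℝ) / (p n : ℝ) ≤ c

/-- `σ ∈ {-1,1}^ℕ`. -/
def IsSigma (σ : ℕ → ℤ) : Prop := ∀ n, σ n = 1 ∨ σ n = -1

/-- `α` is admissible: `α m ∈ {-⌊N/2⌋, …, N - 1 - ⌊N/2⌋}` where `N = #(D m)`,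
for every `m` with `#(D m) = N_m > 3`. -/
def Admissible (D : ℕ → Finset ℕ) (α : ℕ → ℤ) : Prop :=
  ∀ m, 1 ≤ m → 3 < (D m).card →
    -(((D m).card / 2 : ℕ) : ℤ) ≤ α m ∧
      α m ≤ ((D m).card : ℤ) - 1 - (((D m).card / 2 : ℕ) : ℤ)

/-- The largest element `d n` (resp. `b n`) of `D n`. -/
def bOf (D : ℕ → Finset ℕ) (n : ℕ) : ℕ := (D n).sup id

/-- The middle element `a n` of a digit set `{0, a, b}`. -/
def aOf (D : ℕ → Finset ℕ) (n : ℕ) : ℕ := (((D n).erase 0).erase ((D n).sup id)).sup id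

/-- `l n`: the 2-adic valuation of `d n`, i.e. `d n = 2^(l n) * d'` with `d'` odd. -/
def lOf (D : ℕ → Finset ℕ) (n : ℕ) : ℕ := padicValNat 2 ((D n).sup id)

/-- The finite set `Λ_n^{σ,α}`. -/
def LamN (p : ℕ → ℕ) (D : ℕ → Finset ℕ) (σ α : ℕ → ℤ) (n : ℕ) : Set ℝ :=
  { x | ∃ c : ℕ → ℝ,
      (∀ i, (D i).card = 2 → c i = 0 ∨ c i = (σ i : ℝ) / 2 ^ (1 + lOf D i)) ∧
      (∀ i, (D i).card = 3 → c i = 0 ∨ c i = 1 / 3 ∨ c i = -(1 / 3)) ∧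
      (∀ i, 3 < (D i).card → c i = (α i : ℝ) / ((D i).card : ℝ)) ∧
      x = ∑ i ∈ Finset.Icc 1 n, (Pprod p i : ℝ) * c i }

/-- `Λ^{σ,α} = ⋃_{n ≥ 1} Λ_n^{σ,α}`. -/
def Lam (p : ℕ → ℕ) (D : ℕ → Finset ℕ) (σ α : ℕ → ℤ) : Set ℝ :=
  ⋃ n ∈ Set.Ici 1, LamN p D σ α n

/-- The Fourier transform `μ̂(ξ) = ∫ e^{-2πixξ} dμ(x)`. -/
def FT (μ : Measure ℝ) (ξ : ℝ) : ℂ :=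
  ∫ x : ℝ, Complex.exp (-(2 * Real.pi * Complex.I * x * ξ)) ∂μ

/-- The mask polynomial `m_E(t) = (1/#E) ∑_{d ∈ E} e^{2πidt}`. -/
def mask (E : Finset ℕ) (t : ℝ) : ℂ :=
  (E.card : ℂ)⁻¹ * ∑ d ∈ E, Complex.exp (2 * Real.pi * Complex.I * (d : ℝ) * t)

end

noncomputable section

/-!
Since `2 cos x cos y = cos (x - y) + cos (x + y)`, completing the square in `cos (x - y)` writes
`8 f + 1` as a sum of two squares. Both squares vanish exactly when `cos (2 x) = -1/2` and
`x + y ∈ πℤ`, i.e. when `x` and `y` are, in some order, congruent to `π / 3` and `2π / 3`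
modulo `π`; the window `(-π, π]` contains two representatives of each class, hence `4 + 4` points.
-/

lemma modEq_iff_eq_sub_or_eq_of_mem_Ioc {α : Type*} [AddCommGroup α] [LinearOrder α]
    [IsOrderedAddMonoid α] {p b c x : α} (hc : c ∈ Set.Ioc b (b + p))
    (hx : x ∈ Set.Ioc (b - p) (b + p)) :
    x ≡ c [PMOD p] ↔ x = c - p ∨ x = c := by
  obtain ⟨hbc, hcb⟩ := hc
  obtain ⟨hbx, hxb⟩ := hx
  have hp : 0 < p := (lt_add_iff_pos_right b).1 (hbc.trans_le hcb)
  rw [AddCommGroup.modEq_iff_zsmul]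
  constructor
  · rintro ⟨m, hm⟩
    have h_lower : (-1 : ℤ) • p < m • p := by
      rw [hm, neg_one_zsmul, neg_lt_sub_iff_lt_add']
      calc x ≤ b + p := hxb
        _ < c + p := by gcongr
    have h_upper : m • p < (2 : ℤ) • p := by
      rw [hm, two_zsmul, sub_lt_iff_lt_add]
      calc c ≤ b + p := hcb
        _ = p + p + (b - p) := by abel
        _ < p + p + x := by gcongr
    rw [zsmul_lt_zsmul_iff_left hp] at h_lower h_upper
    obtain rfl | rfl : m = 0 ∨ m = 1 := by lia
    · rw [zero_zsmul, eq_comm, sub_eq_zero] at hm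
      exact .inr hm.symm
    · rw [one_zsmul] at hm
      exact .inl (by rw [hm, sub_sub_cancel])
  · rintro (rfl | rfl)
    · exact ⟨1, by simp⟩
    · exact ⟨0, by simp⟩

lemma sin_eq_zero_iff_modEq_zero {x : ℝ} : sin x = 0 ↔ x ≡ 0 [PMOD π] := by
  simp only [Real.sin_eq_zero_iff, AddCommGroup.modEq_zero_iff_eq_zsmul, zsmul_eq_mul,
    eq_comm (a := x)]

lemma cos_two_mul_eq_cos_two_mul_iff_modEq {x y : ℝ} :
    cos (2 * x) = cos (2 * y) ↔ x ≡ y [PMOD π] ∨ x ≡ -y [PMOD π] := by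
  have h_factor : cos (2 * x) - cos (2 * y) = -2 * (sin (x - y) * sin (x - -y)) := by
    rw [cos_sub_cos]
    ring_nf
  rw [← sub_eq_zero, h_factor, mul_eq_zero_iff_left (by norm_num), mul_eq_zero]
  simp only [sin_eq_zero_iff_modEq_zero, AddCommGroup.sub_modEq_zero]

lemma cos_two_mul_eq_neg_half_iff_modEq {x : ℝ} :
    cos (2 * x) = -(1 / 2) ↔ x ≡ π / 3 [PMOD π] ∨ x ≡ 2 * π / 3 [PMOD π] := by
  have h_cos : cos (2 * (π / 3)) = -(1 / 2) := by
    rw [Real.cos_two_mul, cos_pi_div_three]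
    norm_num
  have h_class : -(π / 3) ≡ 2 * π / 3 [PMOD π] :=
    AddCommGroup.modEq_iff_zsmul.2 ⟨1, by rw [one_zsmul]; ring⟩
  rw [← h_cos, cos_two_mul_eq_cos_two_mul_iff_modEq]
  exact or_congr_right ⟨(·.trans h_class), (·.trans h_class.symm)⟩

lemma eight_mul_cos_mul_cos_mul_cos_sub_add_one (x y : ℝ) :
    8 * (cos x * cos y * cos (x - y)) + 1 =
      (2 * cos (x - y) + cos (x + y)) ^ 2 + sin (x + y) ^ 2 := by
  have h_prod := Real.two_mul_cos_mul_cos x y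
  have h_pyth := sin_sq_add_cos_sq (x + y)
  linear_combination 4 * cos (x - y) * h_prod - h_pyth

lemma neg_one_eighth_le_cos_mul_cos_mul_cos_sub (x y : ℝ) :
    -(1 / 8) ≤ cos x * cos y * cos (x - y) := by
  have h_nonneg : 0 ≤ 8 * (cos x * cos y * cos (x - y)) + 1 := by
    rw [eight_mul_cos_mul_cos_mul_cos_sub_add_one]
    positivity
  linarith

lemma two_mul_cos_sub_add_cos_add_eq_zero_iff {x y : ℝ} (h : sin (x + y) = 0) :
    2 * cos (x - y) + cos (x + y) = 0 ↔ cos (2 * x) = -(1 / 2) := by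
  have h_cos_sq : cos (x + y) ^ 2 = 1 := by
    rw [cos_sq', h]
    norm_num
  have h_mul : cos (2 * x) = cos (x - y) * cos (x + y) := by
    rw [show 2 * x = (x - y) + (x + y) by ring, cos_add (x - y), h, mul_zero, sub_zero]
  constructor <;> intro h_eq
  · linear_combination h_mul + cos (x + y) / 2 * h_eq - h_cos_sq / 2
  · linear_combination 2 * cos (x + y) * (h_eq - h_mul) - 2 * cos (x - y) * h_cos_sq

lemma cos_mul_cos_mul_cos_sub_eq_neg_one_eighth_iff {x y : ℝ} :
    cos x * cos y * cos (x - y) = -(1 / 8) ↔ cos (2 * x) = -(1 / 2) ∧ sin (x + y) = 0 := by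
  calc cos x * cos y * cos (x - y) = -(1 / 8)
      ↔ 8 * (cos x * cos y * cos (x - y)) + 1 = 0 := by constructor <;> intro h <;> linarith
    _ ↔ 2 * cos (x - y) + cos (x + y) = 0 ∧ sin (x + y) = 0 := by
      rw [eight_mul_cos_mul_cos_mul_cos_sub_add_one,
        add_eq_zero_iff_of_nonneg (sq_nonneg _) (sq_nonneg _), sq_eq_zero_iff, sq_eq_zero_iff]
    _ ↔ cos (2 * x) = -(1 / 2) ∧ sin (x + y) = 0 :=
      and_congr_left two_mul_cos_sub_add_cos_add_eq_zero_iff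

lemma cos_mul_cos_mul_cos_sub_eq_neg_one_eighth_iff_modEq {x y : ℝ} :
    cos x * cos y * cos (x - y) = -(1 / 8) ↔
      x ≡ π / 3 [PMOD π] ∧ y ≡ 2 * π / 3 [PMOD π] ∨
        x ≡ 2 * π / 3 [PMOD π] ∧ y ≡ π / 3 [PMOD π] := by
  have h_sum : π / 3 + 2 * π / 3 ≡ 0 [PMOD π] := by
    rw [show π / 3 + 2 * π / 3 = π by ring]
    exact AddCommGroup.self_modEq_zero
  have h_partner {a b : ℝ} (hab : a + b ≡ 0 [PMOD π]) (hx : x ≡ a [PMOD π]) :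
      x + y ≡ 0 [PMOD π] ↔ y ≡ b [PMOD π] :=
    ⟨fun h ↦ hx.add_iff_left.1 (h.trans hab.symm), fun h ↦ (hx.add h).trans hab⟩
  rw [cos_mul_cos_mul_cos_sub_eq_neg_one_eighth_iff, cos_two_mul_eq_neg_half_iff_modEq,
    sin_eq_zero_iff_modEq_zero, or_and_right]
  exact or_congr (and_congr_right (h_partner h_sum))
    (and_congr_right (h_partner (by rwa [add_comm])))

lemma modEq_pi_div_three_iff_of_mem_Ioc {x : ℝ} (hx : x ∈ Set.Ioc (-π) π) :
    x ≡ π / 3 [PMOD π] ↔ x = -(2 * π / 3) ∨ x = π / 3 := by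
  rw [modEq_iff_eq_sub_or_eq_of_mem_Ioc (b := 0) (by constructor <;> linarith [pi_pos])
    (by simpa using hx), show π / 3 - π = -(2 * π / 3) by ring]

lemma modEq_two_pi_div_three_iff_of_mem_Ioc {x : ℝ} (hx : x ∈ Set.Ioc (-π) π) :
    x ≡ 2 * π / 3 [PMOD π] ↔ x = -(π / 3) ∨ x = 2 * π / 3 := by
  rw [modEq_iff_eq_sub_or_eq_of_mem_Ioc (b := 0) (by constructor <;> linarith [pi_pos])
    (by simpa using hx), show 2 * π / 3 - π = -(π / 3) by ring]

/-- `f(x,y) = cos x cos y cos(x-y) ≥ -1/8` everywhere, with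
equality on `(-π,π] × (-π,π]` exactly at eight points. -/
theorem cos_prod_min (hf : True) :
    (∀ x y : ℝ, -(1 / 8 : ℝ) ≤ Real.cos x * Real.cos y * Real.cos (x - y)) ∧
    ∀ x y : ℝ, x ∈ Set.Ioc (-Real.pi) Real.pi → y ∈ Set.Ioc (-Real.pi) Real.pi →
      (Real.cos x * Real.cos y * Real.cos (x - y) = -(1 / 8 : ℝ) ↔
        ((x, y) ∈ ({(-(2 * Real.pi / 3), 2 * Real.pi / 3),
                     (-(Real.pi / 3), Real.pi / 3),
                     (Real.pi / 3, -(Real.pi / 3)),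
                     (2 * Real.pi / 3, -(2 * Real.pi / 3)),
                     (2 * Real.pi / 3, Real.pi / 3),
                     (Real.pi / 3, 2 * Real.pi / 3),
                     (-(2 * Real.pi / 3), -(Real.pi / 3)),
                     (-(Real.pi / 3), -(2 * Real.pi / 3))} : Set (ℝ × ℝ)))) := by
  refine ⟨neg_one_eighth_le_cos_mul_cos_mul_cos_sub, fun x y hx hy ↦ ?_⟩
  rw [cos_mul_cos_mul_cos_sub_eq_neg_one_eighth_iff_modEq,
    modEq_pi_div_three_iff_of_mem_Ioc hx, modEq_two_pi_div_three_iff_of_mem_Ioc hx,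
    modEq_pi_div_three_iff_of_mem_Ioc hy, modEq_two_pi_div_three_iff_of_mem_Ioc hy]
  simp only [Set.mem_insert_iff, Set.mem_singleton_iff, Prod.mk.injEq]
  tauto

end
end

section
/- Suppose the pair (𝒫,𝒟) satisfies conditions (T1)–(T3). Fix σ ∈ {−1,1}^ℕ, an admissible α, k ∈ ℕ, and an integer n ≥ k+1, and set h(k,n) = (∏_{i=k+1}^{n−1} 1/Φ(i)) · (∏_{j=1}^{k} 1/Φ(j) + 1). Then every λ ∈ Λ_k^{σ,α} satisfies |λ| ≤ P_k, and for all ξ with |ξ| ≤ 1 and all λ ∈ Λ_k^{σ,α}: (i) if Φ(n) = N_n then (N_n/P_n)|ξ+λ| ≤ h(k,n)/2; (ii) if Φ(n) = 2 then (d_n/P_n)|ξ+λ| ≤ h(k,n); (iii) if Φ(n) = 3 then (|a_n + b_n|/P_n)|ξ+λ| ≤ (4/3)h(k,n) and (|a_n − b_n|/P_n)|ξ+λ| ≤ (4/3)h(k,n). -/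
open MeasureTheory Filter Finset Real
open scoped ENNReal NNReal

noncomputable section

/-- `h(k,n) = (∏_{i=k+1}^{n-1} 1/Φ(i)) (∏_{j=1}^{k} 1/Φ(j) + 1)`. -/
def hFactor (D : ℕ → Finset ℕ) (k n : ℕ) : ℝ :=
  (∏ i ∈ Finset.Icc (k + 1) (n - 1), ((D i).card : ℝ)⁻¹) *
    ((∏ j ∈ Finset.Icc 1 k, ((D j).card : ℝ)⁻¹) + 1)

/-!
Since `P_i` at least doubles at each step and every
coefficient of `λ` has absolute value at most `1/2`, a geometric sum gives `|λ| ≤ P_k`.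
Since `Φ(i) ≤ p_i`,
`h(k,n) P_{n-1} = (∏_{k<i<n} p_i/Φ(i)) (∏_{j≤k} p_j/Φ(j) + P_k) ≥ 1 + P_k ≥ |ξ + λ|`,
so that `(q/P_n) |ξ + λ| ≤ (q/p_n) h(k,n)` for every `q ≥ 0`. The three estimates are the cases
`q = N_n ≤ p_n/2`, `q = d_n ≤ p_n` and `q = b_n ± a_n ≤ 2 b_n ≤ (4/3) p_n`.
-/

/-- The size constraints that (T1)–(T3) put on the digit set `D n`, phrased through its cardinality
and its largest digit. The requirement `sup b_n/p_n < 2/3` is relaxed to `b_n/p_n ≤ 2/3` and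
written without division. -/
structure SmallDigits (p : ℕ → ℕ) (D : ℕ → Finset ℕ) (n : ℕ) : Prop where
  two_le_card : 2 ≤ (D n).card
  card_le : (D n).card ≤ p n
  two_mul_card_le : 3 < (D n).card → 2 * (D n).card ≤ p n
  bOf_le : (D n).card = 2 → bOf D n ≤ p n
  three_mul_bOf_le : (D n).card = 3 → 3 * bOf D n ≤ 2 * p n

section

variable {p : ℕ → ℕ} {D : ℕ → Finset ℕ} {σ α : ℕ → ℤ} {i k m n : ℕ}

lemma T1cond.smallDigits (h : T1cond p D n) : SmallDigits p D n := by
  obtain ⟨N, hN, ⟨t, ht⟩, hlt, hD⟩ := h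
  have hcard : (D n).card = N := by rw [hD, card_range]
  have ht2 : 1 < t := by rwa [ht, lt_mul_iff_one_lt_right (by omega)] at hlt
  have h2N : 2 * N ≤ p n := by
    rw [ht, mul_comm]
    exact Nat.mul_le_mul_left N ht2
  constructor <;> omega

lemma T2cond.smallDigits (h : T2cond p D n) (hb : 3 * bOf D n ≤ 2 * p n) :
    SmallDigits p D n := by
  obtain ⟨a, b, ha, hab, -, -, -, hD⟩ := h
  have hcard : (D n).card = 3 := by
    rw [hD, card_eq_three]
    exact ⟨0, a, b, by omega, by omega, by omega, rfl⟩
  have hbOf : bOf D n = b := by simp [bOf, hD, hab.le]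
  constructor <;> omega

lemma T3cond.smallDigits (h : T3cond p D n) : SmallDigits p D n := by
  obtain ⟨d, hd, hdp, -, hD⟩ := h
  have hcard : (D n).card = 2 := by rw [hD, card_pair hd.ne]
  have hbOf : bOf D n = d := by simp [bOf, hD]
  constructor <;> omega

lemma SatisfiesT.smallDigits (hT : SatisfiesT p D) (hn : 1 ≤ n) (hpn : 0 < p n) :
    SmallDigits p D n := by
  obtain ⟨hcond, c, hc, hsup⟩ := hT
  rcases hcond n hn with h | h | h
  · exact h.smallDigits
  · have hb : (bOf D n : ℝ) ≤ 2 / 3 * p n :=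
      (div_le_iff₀ (by exact_mod_cast hpn)).1 ((hsup n hn h).trans hc.le)
    refine h.smallDigits ?_
    have : (3 * bOf D n : ℝ) ≤ 2 * p n := by linarith
    exact_mod_cast this
  · exact h.smallDigits

lemma IsSigma.abs_le_one (hσ : IsSigma σ) (i : ℕ) : |σ i| ≤ 1 := by
  rcases hσ i with h | h <;> simp [h]

lemma Admissible.two_mul_abs_le_card (hα : Admissible D α) (hi : 1 ≤ i) (hcard : 3 < (D i).card) :
    2 * |α i| ≤ (D i).card := by
  obtain ⟨hlow, hup⟩ := hα i hi hcard
  have : |α i| ≤ ((D i).card / 2 : ℕ) := abs_le.2 ⟨hlow, by omega⟩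
  omega

lemma aOf_le_bOf (D : ℕ → Finset ℕ) (n : ℕ) : aOf D n ≤ bOf D n :=
  sup_mono ((erase_subset _ _).trans (erase_subset _ _))

lemma Pprod_succ (p : ℕ → ℕ) (n : ℕ) : Pprod p (n + 1) = Pprod p n * p (n + 1) :=
  prod_Icc_succ_top (by omega) p

lemma Pprod_pos (hp : ∀ i, 1 ≤ i → 0 < p i) (n : ℕ) : 0 < Pprod p n :=
  prod_pos fun i hi => hp i (mem_Icc.1 hi).1

lemma Pprod_mul_prod_Icc (p : ℕ → ℕ) (hkm : k ≤ m) :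
    Pprod p k * ∏ i ∈ Icc (k + 1) m, p i = Pprod p m := by
  have hIcc (a : ℕ) : Icc 1 a = Ioc 0 a := Icc_add_one_left_eq_Ioc 0 a
  rw [Pprod, Pprod, hIcc, hIcc, Icc_add_one_left_eq_Ioc, prod_Ioc_consecutive p k.zero_le hkm]

lemma sum_Pprod_le_two_mul (hp : ∀ i, 1 ≤ i → 2 ≤ p i) (k : ℕ) :
    ∑ i ∈ Icc 1 k, Pprod p i ≤ 2 * Pprod p k := by
  induction k with
  | zero => simp
  | succ k ih =>
    calc ∑ i ∈ Icc 1 (k + 1), Pprod p i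
        = ∑ i ∈ Icc 1 k, Pprod p i + Pprod p (k + 1) := sum_Icc_succ_top (by omega) _
      _ ≤ Pprod p k * 2 + Pprod p (k + 1) := by linarith
      _ ≤ Pprod p k * p (k + 1) + Pprod p (k + 1) := by
          gcongr
          exact hp (k + 1) (by omega)
      _ = 2 * Pprod p (k + 1) := by rw [← Pprod_succ, two_mul]

lemma abs_sum_Pprod_mul_le (hp : ∀ i, 1 ≤ i → 2 ≤ p i) {c : ℕ → ℝ} {r : ℝ}
    (hc : ∀ i, 1 ≤ i → |c i| ≤ r) (k : ℕ) :
    |∑ i ∈ Icc 1 k, (Pprod p i : ℝ) * c i| ≤ 2 * r * Pprod p k := by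
  have hr : 0 ≤ r := (abs_nonneg _).trans (hc 1 le_rfl)
  calc |∑ i ∈ Icc 1 k, (Pprod p i : ℝ) * c i|
      ≤ ∑ i ∈ Icc 1 k, |(Pprod p i : ℝ) * c i| := abs_sum_le_sum_abs _ _
    _ ≤ ∑ i ∈ Icc 1 k, (Pprod p i : ℝ) * r := by
        refine sum_le_sum fun i hi => ?_
        rw [abs_mul, Nat.abs_cast]
        gcongr
        exact hc i (mem_Icc.1 hi).1
    _ = r * (∑ i ∈ Icc 1 k, Pprod p i : ℕ) := by rw [← sum_mul, mul_comm, Nat.cast_sum]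
    _ ≤ r * (2 * Pprod p k : ℕ) := by
        gcongr
        exact sum_Pprod_le_two_mul hp k
    _ = 2 * r * Pprod p k := by push_cast; ring

lemma abs_coeff_le_half {c : ℝ} (hcard : 2 ≤ (D i).card) (hσ : |σ i| ≤ 1)
    (hα : 3 < (D i).card → 2 * |α i| ≤ (D i).card)
    (h2 : (D i).card = 2 → c = 0 ∨ c = (σ i : ℝ) / 2 ^ (1 + lOf D i))
    (h3 : (D i).card = 3 → c = 0 ∨ c = 1 / 3 ∨ c = -(1 / 3))
    (h4 : 3 < (D i).card → c = (α i : ℝ) / (D i).card) : |c| ≤ 1 / 2 := by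
  rcases (by omega : (D i).card = 2 ∨ (D i).card = 3 ∨ 3 < (D i).card) with h | h | h
  · rcases h2 h with rfl | rfl
    · norm_num
    · rw [abs_div, abs_of_pos (by positivity : (0 : ℝ) < 2 ^ (1 + lOf D i))]
      exact div_le_div₀ zero_le_one (by exact_mod_cast hσ) two_pos
        (le_self_pow₀ one_le_two (by omega))
  · rcases h3 h with rfl | rfl | rfl <;> norm_num [abs_of_pos]
  · have hN : (0 : ℝ) < (D i).card := by positivity
    have hαN : 2 * |(α i : ℝ)| ≤ (D i).card := by exact_mod_cast hα h
    rw [h4 h, abs_div, Nat.abs_cast, div_le_iff₀ hN]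
    linarith

lemma abs_le_Pprod_of_mem_LamN (hD : ∀ i, 1 ≤ i → SmallDigits p D i) (hσ : ∀ i, |σ i| ≤ 1)
    (hα : ∀ i, 1 ≤ i → 3 < (D i).card → 2 * |α i| ≤ (D i).card) {l : ℝ}
    (hl : l ∈ LamN p D σ α k) : |l| ≤ Pprod p k := by
  obtain ⟨c, h2, h3, h4, rfl⟩ := hl
  have hp (i : ℕ) (hi : 1 ≤ i) : 2 ≤ p i := (hD i hi).two_le_card.trans (hD i hi).card_le
  have hc (i : ℕ) (hi : 1 ≤ i) : |c i| ≤ 1 / 2 :=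
    abs_coeff_le_half (hD i hi).two_le_card (hσ i) (hα i hi) (h2 i) (h3 i) (h4 i)
  simpa using abs_sum_Pprod_mul_le hp hc k

lemma one_add_Pprod_le_hFactor_mul (hcard : ∀ i, 1 ≤ i → 0 < (D i).card ∧ (D i).card ≤ p i)
    (hkm : k ≤ m) : 1 + (Pprod p k : ℝ) ≤ hFactor D k (m + 1) * Pprod p m := by
  have hprod (a b : ℕ) (ha : 1 ≤ a) :
      1 ≤ (∏ i ∈ Icc a b, ((D i).card : ℝ)⁻¹) * ∏ i ∈ Icc a b, (p i : ℝ) := by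
    rw [← prod_mul_distrib]
    refine one_le_prod fun i hi => ?_
    obtain ⟨hpos, hle⟩ := hcard i (ha.trans (mem_Icc.1 hi).1)
    exact (one_le_inv_mul₀ (by exact_mod_cast hpos)).2 (by exact_mod_cast hle)
  have hlow : 1 ≤ (∏ j ∈ Icc 1 k, ((D j).card : ℝ)⁻¹) * Pprod p k := by
    simpa only [Pprod, Nat.cast_prod] using hprod 1 k le_rfl
  calc 1 + (Pprod p k : ℝ)
      ≤ (∏ j ∈ Icc 1 k, ((D j).card : ℝ)⁻¹) * Pprod p k + Pprod p k := by gcongr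
    _ ≤ ((∏ i ∈ Icc (k + 1) m, ((D i).card : ℝ)⁻¹) * ∏ i ∈ Icc (k + 1) m, (p i : ℝ)) *
          ((∏ j ∈ Icc 1 k, ((D j).card : ℝ)⁻¹) * Pprod p k + Pprod p k) :=
        le_mul_of_one_le_left (by positivity) (hprod (k + 1) m (by omega))
    _ = hFactor D k (m + 1) * Pprod p m := by
        rw [← Pprod_mul_prod_Icc p hkm, hFactor, Nat.add_sub_cancel]
        push_cast
        ring

lemma div_Pprod_mul_abs_le (hcard : ∀ i, 1 ≤ i → 0 < (D i).card ∧ (D i).card ≤ p i)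
    (hkn : k + 1 ≤ n) {x q r : ℝ} (hx : |x| ≤ 1 + Pprod p k) (hr : 0 ≤ r) (hq : q ≤ r * p n) :
    q / Pprod p n * |x| ≤ r * hFactor D k n := by
  obtain ⟨m, rfl⟩ : ∃ m, n = m + 1 := ⟨n - 1, by omega⟩
  have hP : (0 : ℝ) < Pprod p (m + 1) := by
    exact_mod_cast Pprod_pos (fun i hi => (hcard i hi).1.trans_le (hcard i hi).2) (m + 1)
  rw [div_mul_eq_mul_div, div_le_iff₀ hP]
  calc q * |x| ≤ (r * p (m + 1)) * |x| := by gcongr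
    _ ≤ (r * p (m + 1)) * (hFactor D k (m + 1) * Pprod p m) := by
        gcongr
        exact hx.trans (one_add_Pprod_le_hFactor_mul hcard (by omega))
    _ = r * hFactor D k (m + 1) * Pprod p (m + 1) := by
        rw [Pprod_succ]
        push_cast
        ring

theorem lamK_bounds_general (hD : ∀ i, 1 ≤ i → SmallDigits p D i) (hσ : ∀ i, |σ i| ≤ 1)
    (hα : ∀ i, 1 ≤ i → 3 < (D i).card → 2 * |α i| ≤ (D i).card) (hkn : k + 1 ≤ n) :
    (∀ l ∈ LamN p D σ α k, |l| ≤ (Pprod p k : ℝ)) ∧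
    ∀ ξ : ℝ, |ξ| ≤ 1 → ∀ l ∈ LamN p D σ α k,
      (3 < (D n).card →
        ((D n).card : ℝ) / (Pprod p n : ℝ) * |ξ + l| ≤ hFactor D k n / 2) ∧
      ((D n).card = 2 →
        (bOf D n : ℝ) / (Pprod p n : ℝ) * |ξ + l| ≤ hFactor D k n) ∧
      ((D n).card = 3 →
        ((aOf D n : ℝ) + (bOf D n : ℝ)) / (Pprod p n : ℝ) * |ξ + l| ≤
            4 / 3 * hFactor D k n ∧
          ((bOf D n : ℝ) - (aOf D n : ℝ)) / (Pprod p n : ℝ) * |ξ + l| ≤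
            4 / 3 * hFactor D k n) := by
  have habs {l : ℝ} (hl : l ∈ LamN p D σ α k) : |l| ≤ Pprod p k :=
    abs_le_Pprod_of_mem_LamN hD hσ hα hl
  refine ⟨fun _ => habs, fun ξ hξ l hl => ?_⟩
  have hx : |ξ + l| ≤ 1 + Pprod p k := (abs_add_le ξ l).trans (add_le_add hξ (habs hl))
  have bound {q r : ℝ} : 0 ≤ r → q ≤ r * p n → q / Pprod p n * |ξ + l| ≤ r * hFactor D k n :=
    div_Pprod_mul_abs_le
      (fun i hi => ⟨two_pos.trans_le (hD i hi).two_le_card, (hD i hi).card_le⟩) hkn hx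
  have hDn : SmallDigits p D n := hD n (by omega)
  refine ⟨fun h => ?_, fun h => ?_, fun h => ?_⟩
  · have h2N : 2 * ((D n).card : ℝ) ≤ p n := by exact_mod_cast hDn.two_mul_card_le h
    simpa only [one_div_mul_eq_div] using bound (r := 1 / 2) (by norm_num) (by linarith)
  · have hd : (bOf D n : ℝ) ≤ p n := by exact_mod_cast hDn.bOf_le h
    simpa only [one_mul] using bound zero_le_one (by linarith)
  · have hb : 3 * (bOf D n : ℝ) ≤ 2 * p n := by exact_mod_cast hDn.three_mul_bOf_le h
    have hab : (aOf D n : ℝ) ≤ bOf D n := by exact_mod_cast aOf_le_bOf D n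
    exact ⟨bound (by norm_num) (by linarith), bound (by norm_num) (by linarith)⟩

end

/-- Proposition 2.4. Every `λ ∈ Λ_k^{σ,α}` satisfies `|λ| ≤ P_k`,
and for `|ξ| ≤ 1`, `λ ∈ Λ_k^{σ,α}` and `n ≥ k+1` one has the bounds (i)–(iii). -/
theorem lamK_bounds (p : ℕ → ℕ) (D : ℕ → Finset ℕ)
    (hp : ∀ m, 1 ≤ m → 1 < p m) (hT : SatisfiesT p D)
    (σ α : ℕ → ℤ) (hσ : IsSigma σ) (hα : Admissible D α)
    (k n : ℕ) (hkn : k + 1 ≤ n) :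
    (∀ l ∈ LamN p D σ α k, |l| ≤ (Pprod p k : ℝ)) ∧
    ∀ ξ : ℝ, |ξ| ≤ 1 → ∀ l ∈ LamN p D σ α k,
      (3 < (D n).card →
        ((D n).card : ℝ) / (Pprod p n : ℝ) * |ξ + l| ≤ hFactor D k n / 2) ∧
      ((D n).card = 2 →
        (bOf D n : ℝ) / (Pprod p n : ℝ) * |ξ + l| ≤ hFactor D k n) ∧
      ((D n).card = 3 →
        ((aOf D n : ℝ) + (bOf D n : ℝ)) / (Pprod p n : ℝ) * |ξ + l| ≤
            4 / 3 * hFactor D k n ∧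
          ((bOf D n : ℝ) - (aOf D n : ℝ)) / (Pprod p n : ℝ) * |ξ + l| ≤
            4 / 3 * hFactor D k n) :=
  lamK_bounds_general (fun i hi => hT.smallDigits hi (zero_lt_one.trans (hp i hi)))
    hσ.abs_le_one (fun _ => hα.two_mul_abs_le_card) hkn

end
end

section
/- Suppose the pair (𝒫,𝒟) satisfies conditions (T1)–(T3). Then the zero set of the Fourier transform of μ_{𝒫,𝒟} equals 𝒵(μ̂_{𝒫,𝒟}) = (⋃_{i : Φ(i)=2} P_i · (2ℤ+1)/(2d_i)) ∪ (⋃_{j : Φ(j)=3} P_j · (ℤ∖3ℤ)/3) ∪ (⋃_{m : Φ(m)=N_m} P_m · (ℤ∖N_mℤ)/N_m). -/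
open MeasureTheory Filter Finset Real
open scoped ENNReal NNReal

noncomputable section

/-!
Put `νₙ = δ_{Pₙ⁻¹Dₙ}`. As soon as the convolutions converge weakly, the infinite product
`μ̂ = ∏ ν̂ₙ` vanishes exactly where one of its factors does. Indeed
`1 - ‖ν̂(2t)‖² ≤ 4 (1 - ‖ν̂(t)‖²)` for every probability measure `ν`, so that summability of
`1 - ‖ν̂ₙ‖²` spreads from a neighbourhood of `0`, where it holds because `μ̂ ≠ 0` there, to the
whole line, where it gives `μ̂(t) ≠ 0` unless some `ν̂ₙ(t) = 0`. The zeros of a factor are those of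
a polynomial in `x = e^{2πit}`: a geometric sum, `1 + x^d`, or `1 + x^a + x^b`. The last one is
settled by the fact that three unimodular numbers with sum zero form an equilateral triangle.
-/

section InfiniteProduct

open scoped Topology

lemma summable_one_sub_of_tendsto_prod {a : ℕ → ℝ} {L : ℝ} (h0 : ∀ i, 0 ≤ a i)
    (h1 : ∀ i, a i ≤ 1) (ha : Tendsto (fun n => ∏ i ∈ range n, a i) atTop (𝓝 L)) (hL : L ≠ 0) :
    Summable fun i => 1 - a i := by
  have hanti : Antitone fun n => ∏ i ∈ range n, a i := fun m n hmn =>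
    prod_le_prod_of_subset_of_le_one (range_mono hmn) (fun i _ => h0 i) fun i _ _ => h1 i
  have hLpos : 0 < L :=
    (ge_of_tendsto' ha fun n => prod_nonneg fun i _ => h0 i).lt_of_ne' hL
  refine summable_of_sum_range_le (c := -log L) (fun i => sub_nonneg.2 (h1 i)) fun n => ?_
  suffices L ≤ exp (-∑ i ∈ range n, (1 - a i)) from
    le_neg.1 ((log_le_iff_le_exp hLpos).2 this)
  calc L ≤ ∏ i ∈ range n, a i := hanti.le_of_tendsto ha n
    _ ≤ ∏ i ∈ range n, exp (-(1 - a i)) :=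
      prod_le_prod (fun i _ => h0 i) fun i _ => by
        simpa only [sub_sub_cancel] using one_sub_le_exp_neg (1 - a i)
    _ = exp (-∑ i ∈ range n, (1 - a i)) := by rw [← exp_sum, sum_neg_distrib]

lemma ne_zero_of_tendsto_prod_of_summable {R : Type*} [NormedCommRing R] [NormOneClass R]
    [CompleteSpace R] [NormMulClass R] {a : ℕ → R} {L : R}
    (ha : Tendsto (fun n => ∏ i ∈ range n, a i) atTop (𝓝 L)) (hne : ∀ i, a i ≠ 0)
    (hs : Summable fun i => ‖a i - 1‖) : L ≠ 0 := by
  have hprod := (multipliable_one_add_of_summable hs).tendsto_prod_tprod_nat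
  have htprod : ∏' i, (1 + (a i - 1)) ≠ 0 :=
    tprod_one_add_ne_zero_of_summable (by simpa only [add_sub_cancel] using hne) hs
  simp only [add_sub_cancel] at hprod htprod
  rwa [tendsto_nhds_unique ha hprod]

end InfiniteProduct

section CharFun

open scoped Topology RealInnerProductSpace

variable {E : Type*} [NormedAddCommGroup E] [InnerProductSpace ℝ E] [MeasurableSpace E]

lemma one_sub_norm_charFun_sq_nonneg (μ : Measure E) [IsProbabilityMeasure μ] (t : E) :
    0 ≤ 1 - ‖charFun μ t‖ ^ 2 :=
  sub_nonneg.2 (pow_le_one₀ (norm_nonneg _) (norm_charFun_le_one t))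

variable [BorelSpace E] [SecondCountableTopology E]

lemma integrable_cos_inner (μ : Measure E) [IsFiniteMeasure μ] (t : E) :
    Integrable (fun x => cos ⟪x, t⟫) μ :=
  Integrable.of_bound (by fun_prop) 1 (ae_of_all _ fun x => abs_cos_le_one _)

lemma re_charFun (μ : Measure E) [IsFiniteMeasure μ] (t : E) :
    (charFun μ t).re = ∫ x, cos ⟪x, t⟫ ∂μ := by
  have hint : Integrable (fun x => Complex.exp (⟪x, t⟫ * Complex.I)) μ :=
    Integrable.of_bound (by fun_prop) 1
      (ae_of_all _ fun x => (Complex.norm_exp_ofReal_mul_I _).le)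
  rw [charFun_apply, ← RCLike.re_eq_complex_re, ← integral_re hint]
  simp only [RCLike.re_eq_complex_re, Complex.exp_ofReal_mul_I_re]

-- Pointwise, this is `1 - cos 2θ ≤ 4 (1 - cos θ)`.
lemma one_sub_re_charFun_two_smul_le (μ : Measure E) [IsProbabilityMeasure μ] (t : E) :
    1 - (charFun μ ((2 : ℝ) • t)).re ≤ 4 * (1 - (charFun μ t).re) := by
  have one_sub_re (s : E) : 1 - (charFun μ s).re = ∫ x, (1 - cos ⟪x, s⟫) ∂μ := by
    rw [integral_sub (integrable_const 1) (integrable_cos_inner μ s), re_charFun]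
    simp
  rw [one_sub_re, one_sub_re, ← integral_const_mul]
  refine integral_mono ((integrable_const 1).sub (integrable_cos_inner μ _))
    (((integrable_const 1).sub (integrable_cos_inner μ t)).const_mul 4) fun x => ?_
  simp only [inner_smul_right, cos_two_mul]
  nlinarith [sq_nonneg (1 - cos ⟪x, t⟫)]

lemma charFun_conv_map_neg (μ : Measure E) [IsFiniteMeasure μ] (t : E) :
    charFun (μ.conv (μ.map Neg.neg)) t = (‖charFun μ t‖ ^ 2 : ℝ) := by
  have hneg : charFun (μ.map Neg.neg) t = charFun μ (-t) := by
    simpa using charFun_map_smul (μ := μ) (-1) t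
  rw [charFun_conv, hneg, charFun_neg, Complex.mul_conj, Complex.normSq_eq_norm_sq]

-- The squared modulus is itself a characteristic function, that of the symmetrization of `μ`.
lemma one_sub_norm_charFun_sq_two_smul_le (μ : Measure E) [IsProbabilityMeasure μ] (t : E) :
    1 - ‖charFun μ ((2 : ℝ) • t)‖ ^ 2 ≤ 4 * (1 - ‖charFun μ t‖ ^ 2) := by
  have : IsProbabilityMeasure (μ.map Neg.neg) :=
    Measure.isProbabilityMeasure_map measurable_neg.aemeasurable
  simpa only [charFun_conv_map_neg, Complex.ofReal_re] using
    one_sub_re_charFun_two_smul_le (μ.conv (μ.map Neg.neg)) t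

lemma exists_charFun_two_pow_inv_smul_ne_zero (μ : Measure E) [IsProbabilityMeasure μ] (t : E) :
    ∃ k : ℕ, charFun μ (((2 : ℝ) ^ k)⁻¹ • t) ≠ 0 := by
  have hsmul : Tendsto (fun k : ℕ => ((2 : ℝ) ^ k)⁻¹ • t) atTop (𝓝 0) := by
    simpa only [inv_pow, zero_smul] using
      (tendsto_pow_atTop_nhds_zero_of_lt_one (r := (2 : ℝ)⁻¹) (by norm_num)
        (by norm_num)).smul_const t
  have hlim : Tendsto (fun k : ℕ => charFun μ (((2 : ℝ) ^ k)⁻¹ • t)) atTop (𝓝 1) := by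
    simpa [Function.comp_def] using (continuous_charFun (μ := μ).tendsto 0).comp hsmul
  exact (hlim.eventually_ne one_ne_zero).exists

variable {ν : ℕ → Measure E} [∀ i, IsProbabilityMeasure (ν i)]

lemma summable_one_sub_norm_charFun_sq_of_two_pow_inv_smul {t : E} {k : ℕ}
    (h : Summable fun i => 1 - ‖charFun (ν i) (((2 : ℝ) ^ k)⁻¹ • t)‖ ^ 2) :
    Summable fun i => 1 - ‖charFun (ν i) t‖ ^ 2 := by
  induction k with
  | zero => simpa using h
  | succ k ih =>
    refine ih (.of_nonneg_of_le (fun i => one_sub_norm_charFun_sq_nonneg (ν i) _) (fun i => ?_)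
      (h.mul_left 4))
    have hhalf : ((2 : ℝ) ^ k)⁻¹ • t = (2 : ℝ) • ((2 : ℝ) ^ (k + 1))⁻¹ • t := by
      rw [smul_smul, pow_succ, mul_inv_rev, mul_inv_cancel_left₀ two_ne_zero]
    rw [hhalf]
    exact one_sub_norm_charFun_sq_two_smul_le (ν i) _

theorem charFun_eq_zero_iff_of_tendsto_prod {μ : Measure E} [IsProbabilityMeasure μ]
    (h : ∀ t, Tendsto (fun n => ∏ i ∈ range n, charFun (ν i) t) atTop (𝓝 (charFun μ t))) (t : E) :
    charFun μ t = 0 ↔ ∃ i, charFun (ν i) t = 0 := by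
  have hsq (s : E) : Tendsto (fun n => ∏ i ∈ range n, ‖charFun (ν i) s‖ ^ 2) atTop
      (𝓝 (‖charFun μ s‖ ^ 2)) := by
    simpa only [norm_prod, prod_pow] using (h s).norm.pow 2
  constructor
  · contrapose!
    intro hne
    obtain ⟨k, hk⟩ := exists_charFun_two_pow_inv_smul_ne_zero μ t
    have hs : Summable fun i => 1 - ‖charFun (ν i) t‖ ^ 2 :=
      summable_one_sub_norm_charFun_sq_of_two_pow_inv_smul <|
        summable_one_sub_of_tendsto_prod (fun i => by positivity)
          (fun i => sub_nonneg.1 (one_sub_norm_charFun_sq_nonneg (ν i) _)) (hsq _) (by simpa)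
    have hlim : ‖charFun μ t‖ ^ 2 ≠ 0 :=
      ne_zero_of_tendsto_prod_of_summable (hsq t) (by simpa) <| by
        simpa only [norm_sub_rev _ (1 : ℝ)] using hs.norm
    simpa using hlim
  · rintro ⟨i, hi⟩
    refine tendsto_nhds_unique (h t) (tendsto_const_nhds.congr' ?_)
    filter_upwards [eventually_gt_atTop i] with n hn
    exact (prod_eq_zero (mem_range.2 hn) hi).symm

end CharFun

section MoranMeasure

variable {p : ℕ → ℕ} {D : ℕ → Finset ℕ} {μ : Measure ℝ}

lemma FT_eq_charFun (μ : Measure ℝ) (ξ : ℝ) : FT μ ξ = charFun μ (-(2 * π * ξ)) := by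
  rw [charFun_apply_real, FT]
  refine integral_congr_ae (ae_of_all μ fun x => congrArg Complex.exp ?_)
  push_cast
  ring

lemma isProbabilityMeasure_unifD {E : Finset ℕ} (hE : E.Nonempty) (s : ℝ) :
    IsProbabilityMeasure (unifD E s) := by
  have hcard : (E.card : ℝ≥0∞) ≠ 0 := by simpa using hE.ne_empty
  constructor
  simp [unifD, ENNReal.inv_mul_cancel hcard (ENNReal.natCast_ne_top _)]

lemma isProbabilityMeasure_muN (p : ℕ → ℕ) (hD : ∀ n, 1 ≤ n → (D n).Nonempty) (n : ℕ) :
    IsProbabilityMeasure (muN p D n) := by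
  induction n with
  | zero => rw [muN]; infer_instance
  | succ n ih =>
    have := isProbabilityMeasure_unifD (hD (n + 1) n.succ_pos) (Pprod p (n + 1) : ℝ)⁻¹
    rw [muN]
    infer_instance

lemma charFun_muN (p : ℕ → ℕ) (hD : ∀ n, 1 ≤ n → (D n).Nonempty) (n : ℕ) (t : ℝ) :
    charFun (muN p D n) t =
      ∏ i ∈ range n, charFun (unifD (D (i + 1)) (Pprod p (i + 1) : ℝ)⁻¹) t := by
  induction n with
  | zero => simp [muN, charFun_dirac]
  | succ n ih =>
    have := isProbabilityMeasure_muN p hD n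
    have := isProbabilityMeasure_unifD (hD (n + 1) n.succ_pos) (Pprod p (n + 1) : ℝ)⁻¹
    rw [muN, charFun_conv, ih, prod_range_succ]

lemma IsMoran.tendsto_charFun (hμ : IsMoran p D μ) (hD : ∀ n, 1 ≤ n → (D n).Nonempty) (t : ℝ) :
    Tendsto (fun n => charFun (muN p D n) t) atTop (nhds (charFun μ t)) :=
  ProbabilityMeasure.tendsto_iff_tendsto_charFun.1
    ((ProbabilityMeasure.tendsto_iff_forall_integral_tendsto
      (μs := fun n => ⟨muN p D n, isProbabilityMeasure_muN p hD n⟩) (μ := ⟨μ, hμ.1⟩)).2 hμ.2) t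

lemma FT_unifD (E : Finset ℕ) (s ξ : ℝ) : FT (unifD E s) ξ = mask E (-(s * ξ)) := by
  unfold FT unifD mask
  rw [integral_smul_measure, integral_finsetSum_measure fun i _ => integrable_dirac (by simp)]
  simp only [integral_dirac, ENNReal.toReal_inv, ENNReal.toReal_natCast, Complex.real_smul]
  push_cast
  congr 1
  refine sum_congr rfl fun d _ => congrArg Complex.exp ?_
  ring

lemma mask_neg (E : Finset ℕ) (t : ℝ) : mask E (-t) = (starRingEnd ℂ) (mask E t) := by
  simp [mask, ← Complex.exp_conj, Complex.conj_ofNat]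

theorem IsMoran.FT_eq_zero_iff (hμ : IsMoran p D μ) (hD : ∀ n, 1 ≤ n → (D n).Nonempty) (ξ : ℝ) :
    FT μ ξ = 0 ↔ ∃ n, 1 ≤ n ∧ mask (D n) (ξ / Pprod p n) = 0 := by
  have := hμ.1
  have (i : ℕ) := isProbabilityMeasure_unifD (hD (i + 1) i.succ_pos) (Pprod p (i + 1) : ℝ)⁻¹
  have hprod := hμ.tendsto_charFun hD
  simp only [charFun_muN p hD] at hprod
  have mask_eq_zero (i : ℕ) : mask (D (i + 1)) (ξ / Pprod p (i + 1)) = 0 ↔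
      charFun (unifD (D (i + 1)) (Pprod p (i + 1) : ℝ)⁻¹) (-(2 * π * ξ)) = 0 := by
    rw [← FT_eq_charFun, FT_unifD, mask_neg, map_eq_zero, inv_mul_eq_div]
  rw [FT_eq_charFun, charFun_eq_zero_iff_of_tendsto_prod hprod]
  simp only [← mask_eq_zero]
  exact ⟨fun ⟨i, hi⟩ => ⟨i + 1, i.succ_pos, hi⟩,
    fun ⟨n, hn, h⟩ => ⟨n - 1, by rwa [Nat.sub_add_cancel hn]⟩⟩

end MoranMeasure

section MaskZeros

lemma exp_two_pi_I_mul_pow_eq_one_iff (t : ℝ) (k : ℕ) :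
    Complex.exp (2 * π * Complex.I * t) ^ k = 1 ↔ ∃ z : ℤ, k * t = z := by
  rw [← Complex.exp_nat_mul, Complex.exp_eq_one_iff]
  refine exists_congr fun z => ?_
  rw [mul_left_comm, mul_comm, mul_left_inj' Complex.two_pi_I_ne_zero]
  norm_cast

lemma exp_two_pi_I_mul_pow_eq_one_and_ne_one_iff (t : ℝ) {N : ℕ} (hN : N ≠ 0) :
    Complex.exp (2 * π * Complex.I * t) ^ N = 1 ∧ Complex.exp (2 * π * Complex.I * t) ≠ 1 ↔
      ∃ z : ℤ, ¬ (N : ℤ) ∣ z ∧ t = z / N := by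
  have hN' : (N : ℝ) ≠ 0 := Nat.cast_ne_zero.2 hN
  have eq_one_iff : Complex.exp (2 * π * Complex.I * t) = 1 ↔ ∃ w : ℤ, t = w := by
    simpa using exp_two_pi_I_mul_pow_eq_one_iff t 1
  have dvd_iff {z : ℤ} (hz : t = z / N) : (N : ℤ) ∣ z ↔ ∃ w : ℤ, t = w := by
    refine exists_congr fun w => ?_
    rw [hz, div_eq_iff hN', mul_comm]
    norm_cast
  rw [exp_two_pi_I_mul_pow_eq_one_iff, ne_eq, eq_one_iff, ← exists_and_right]
  refine exists_congr fun z => ?_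
  rw [mul_comm, ← eq_div_iff hN', and_comm]
  exact and_congr_left fun hz => not_congr (dvd_iff hz).symm

lemma mask_eq_zero_iff_sum_pow {E : Finset ℕ} (hE : E.Nonempty) (t : ℝ) :
    mask E t = 0 ↔ ∑ d ∈ E, Complex.exp (2 * π * Complex.I * t) ^ d = 0 := by
  have hcard : (E.card : ℂ)⁻¹ ≠ 0 := inv_ne_zero (Nat.cast_ne_zero.2 hE.card_ne_zero)
  rw [mask, mul_eq_zero, or_iff_right hcard]
  refine Eq.congr_left (sum_congr rfl fun d _ => ?_)
  rw [← Complex.exp_nat_mul]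
  congr 1
  push_cast
  ring

lemma mask_range_eq_zero_iff {N : ℕ} (hN : N ≠ 0) (t : ℝ) :
    mask (range N) t = 0 ↔ ∃ z : ℤ, ¬ (N : ℤ) ∣ z ∧ t = z / N := by
  rw [← exp_two_pi_I_mul_pow_eq_one_and_ne_one_iff t hN,
    mask_eq_zero_iff_sum_pow (nonempty_range_iff.2 hN)]
  set x := Complex.exp (2 * π * Complex.I * t)
  rcases eq_or_ne x 1 with hx | hx
  · simp [hx, hN]
  · rw [geom_sum_eq hx, div_eq_zero_iff, or_iff_left (sub_ne_zero.2 hx), sub_eq_zero,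
      and_iff_left hx]

lemma sq_add_self_add_one_eq_zero_iff {R : Type*} [CommRing R] [NoZeroDivisors R] [CharZero R]
    (x : R) : x ^ 2 + x + 1 = 0 ↔ x ^ 3 = 1 ∧ x ≠ 1 := by
  constructor
  · intro h
    refine ⟨by linear_combination (x - 1) * h, ?_⟩
    rintro rfl
    norm_num at h
  · rintro ⟨hcube, hne⟩
    exact mul_left_cancel₀ (sub_ne_zero.2 hne) (by linear_combination hcube)

lemma mul_eq_one_of_one_add_add_eq_zero {u v : ℂ} (hu : ‖u‖ = 1) (hv : ‖v‖ = 1)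
    (h : 1 + u + v = 0) : u * v = 1 := by
  have conj_u : u * (starRingEnd ℂ) u = 1 := by simp [Complex.mul_conj', hu]
  have conj_v : v * (starRingEnd ℂ) v = 1 := by simp [Complex.mul_conj', hv]
  have conj_h : 1 + (starRingEnd ℂ) u + (starRingEnd ℂ) v = 0 := by
    simpa using congrArg (starRingEnd ℂ) h
  linear_combination u * v * conj_h - v * conj_u - u * conj_v - h

lemma pow_three_eq_one_of_one_add_add_eq_zero {u v : ℂ} (hu : ‖u‖ = 1) (hv : ‖v‖ = 1)
    (h : 1 + u + v = 0) : u ^ 3 = 1 :=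
  ((sq_add_self_add_one_eq_zero_iff u).1 <| by
    linear_combination u * h - mul_eq_one_of_one_add_add_eq_zero hu hv h).1

lemma one_add_pow_add_pow_eq_zero_iff {x : ℂ} (hx : ‖x‖ = 1) {a b : ℕ} (hab : a.Coprime b)
    (hmod : a % 3 = 1 ∧ b % 3 = 2 ∨ a % 3 = 2 ∧ b % 3 = 1) :
    1 + x ^ a + x ^ b = 0 ↔ x ^ 3 = 1 ∧ x ≠ 1 := by
  have norm_pow_eq (k : ℕ) : ‖x ^ k‖ = 1 := by rw [norm_pow, hx, one_pow]
  constructor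
  · intro h
    have ha : x ^ (a * 3) = 1 := by
      rw [pow_mul]
      exact pow_three_eq_one_of_one_add_add_eq_zero (norm_pow_eq a) (norm_pow_eq b) h
    have hb : x ^ (b * 3) = 1 := by
      rw [pow_mul]
      exact pow_three_eq_one_of_one_add_add_eq_zero (norm_pow_eq b) (norm_pow_eq a)
        (by linear_combination h)
    constructor
    · simpa only [Nat.gcd_mul_right, hab.gcd_eq_one, one_mul] using pow_gcd_eq_one.2 ⟨ha, hb⟩
    · rintro rfl
      norm_num at h
  · intro h
    have hquad := (sq_add_self_add_one_eq_zero_iff x).2 h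
    rw [pow_eq_pow_mod a h.1, pow_eq_pow_mod b h.1]
    rcases hmod with ⟨ha, hb⟩ | ⟨ha, hb⟩ <;> rw [ha, hb] <;> linear_combination hquad

lemma mask_triple_eq_zero_iff {a b : ℕ} (hab : a.Coprime b)
    (hmod : a % 3 = 1 ∧ b % 3 = 2 ∨ a % 3 = 2 ∧ b % 3 = 1) (t : ℝ) :
    mask {0, a, b} t = 0 ↔ ∃ z : ℤ, ¬ 3 ∣ z ∧ t = z / 3 := by
  have hroot := exp_two_pi_I_mul_pow_eq_one_and_ne_one_iff t three_ne_zero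
  push_cast at hroot
  have hnorm : ‖Complex.exp (2 * π * Complex.I * t)‖ = 1 := by simp [Complex.norm_exp]
  have h0 : 0 ∉ ({a, b} : Finset ℕ) := by grind
  rw [← hroot, ← one_add_pow_add_pow_eq_zero_iff hnorm hab hmod,
    mask_eq_zero_iff_sum_pow (insert_nonempty _ _), sum_insert h0, sum_pair (by omega), pow_zero,
    add_assoc]

lemma mask_pair_eq_zero_iff {d : ℕ} (hd : d ≠ 0) (t : ℝ) :
    mask {0, d} t = 0 ↔ ∃ z : ℤ, t = (2 * z + 1) / (2 * d) := by
  have mask_pair : mask {0, d} t = mask (range 2) (d * t) := by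
    simp [mask, sum_pair hd.symm, card_pair hd.symm, sum_range_succ, mul_assoc]
  have hd' : (d : ℝ) ≠ 0 := Nat.cast_ne_zero.2 hd
  have eq_div (z : ℤ) : (d : ℝ) * t = z / (2 : ℕ) ↔ t = z / (2 * d) := by
    push_cast
    field_simp
  simp only [mask_pair, mask_range_eq_zero_iff two_ne_zero, eq_div]
  simp only [Nat.cast_ofNat, ← even_iff_two_dvd, Int.not_even_iff_odd, Odd, ↓existsAndEq,
    Int.cast_add, Int.cast_mul, Int.cast_ofNat, Int.cast_one, true_and]

/-- A digit set of one of the three shapes occurring in (T1)–(T3). Only conditions on the digits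
themselves are recorded, not those that relate them to the scaling factors `p n`. -/
def IsDigitShape (E : Finset ℕ) : Prop :=
  (∃ N, 3 < N ∧ E = range N) ∨
  (∃ a b, a.Coprime b ∧ (a % 3 = 1 ∧ b % 3 = 2 ∨ a % 3 = 2 ∧ b % 3 = 1) ∧ E = {0, a, b}) ∨
  ∃ d, d ≠ 0 ∧ E = {0, d}

lemma IsDigitShape.nonempty {E : Finset ℕ} (hE : IsDigitShape E) : E.Nonempty := by
  rcases hE with ⟨N, hN, rfl⟩ | ⟨a, b, -, -, rfl⟩ | ⟨d, -, rfl⟩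
  · exact nonempty_range_iff.2 (by omega)
  · exact insert_nonempty _ _
  · exact insert_nonempty _ _

lemma IsDigitShape.mask_eq_zero_iff {E : Finset ℕ} (hE : IsDigitShape E) (t : ℝ) :
    mask E t = 0 ↔
      (E.card = 2 ∧ ∃ z : ℤ, t = (2 * z + 1) / (2 * (E.sup id : ℕ))) ∨
      (E.card = 3 ∧ ∃ z : ℤ, ¬ 3 ∣ z ∧ t = z / 3) ∨
      (3 < E.card ∧ ∃ z : ℤ, ¬ (E.card : ℤ) ∣ z ∧ t = z / E.card) := by
  rcases hE with ⟨N, hN, rfl⟩ | ⟨a, b, hab, hmod, rfl⟩ | ⟨d, hd, rfl⟩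
  · have hN2 : N ≠ 2 := by omega
    simp only [mask_range_eq_zero_iff (by omega : N ≠ 0), card_range, hN, hN.ne', hN2,
      false_and, false_or, true_and]
  · have hcard : ({0, a, b} : Finset ℕ).card = 3 :=
      card_eq_three.2 ⟨0, a, b, by omega, by omega, by omega, rfl⟩
    simp [mask_triple_eq_zero_iff hab hmod, hcard]
  · simp [mask_pair_eq_zero_iff hd, card_pair hd.symm]

lemma SatisfiesT.isDigitShape {p : ℕ → ℕ} {D : ℕ → Finset ℕ} (hT : SatisfiesT p D) {n : ℕ}
    (hn : 1 ≤ n) : IsDigitShape (D n) := by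
  rcases hT.1 n hn with ⟨N, hN, -, -, hD⟩ | ⟨a, b, -, -, hab, hmod, -, hD⟩ | ⟨d, hd, -, -, hD⟩
  · exact .inl ⟨N, hN, hD⟩
  · exact .inr (.inl ⟨a, b, hab, hmod, hD⟩)
  · exact .inr (.inr ⟨d, hd.ne', hD⟩)

end MaskZeros

theorem zero_set_fourier_general (p : ℕ → ℕ) (D : ℕ → Finset ℕ) (μ : Measure ℝ)
    (hp : ∀ n, 1 ≤ n → p n ≠ 0) (hD : ∀ n, 1 ≤ n → IsDigitShape (D n)) (hμ : IsMoran p D μ) :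
    {ξ : ℝ | FT μ ξ = 0} =
      (⋃ i ∈ {i : ℕ | 1 ≤ i ∧ (D i).card = 2},
        {x : ℝ | ∃ z : ℤ, x = (Pprod p i : ℝ) * (2 * (z : ℝ) + 1) / (2 * (bOf D i : ℝ))}) ∪
      (⋃ j ∈ {j : ℕ | 1 ≤ j ∧ (D j).card = 3},
        {x : ℝ | ∃ z : ℤ, ¬ (3 ∣ z) ∧ x = (Pprod p j : ℝ) * (z : ℝ) / 3}) ∪
      (⋃ m ∈ {m : ℕ | 1 ≤ m ∧ 3 < (D m).card},
        {x : ℝ | ∃ z : ℤ, ¬ (((D m).card : ℤ) ∣ z) ∧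
          x = (Pprod p m : ℝ) * (z : ℝ) / ((D m).card : ℝ)}) := by
  have hP (n : ℕ) : (Pprod p n : ℝ) ≠ 0 :=
    Nat.cast_ne_zero.2 (prod_ne_zero_iff.2 fun i hi => hp i (mem_Icc.1 hi).1)
  ext ξ
  simp only [Set.mem_ofPred_eq, Set.mem_union, Set.mem_iUnion, exists_prop, ← exists_or,
    hμ.FT_eq_zero_iff fun n hn => (hD n hn).nonempty]
  refine exists_congr fun n => ?_
  rw [and_assoc, and_assoc, and_assoc, ← and_or_left, ← and_or_left, or_assoc]
  refine and_congr_right fun hn => ?_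
  simp only [(hD n hn).mask_eq_zero_iff, div_eq_iff (hP n), div_mul_eq_mul_div, bOf,
    mul_comm (Pprod p n : ℝ)]

/-- equation (1.7). The zero set of the Fourier transform of the
Moran measure. -/
theorem zero_set_fourier (p : ℕ → ℕ) (D : ℕ → Finset ℕ) (μ : Measure ℝ)
    (hp : ∀ n, 1 ≤ n → 1 < p n) (hT : SatisfiesT p D) (hμ : IsMoran p D μ) :
    {ξ : ℝ | FT μ ξ = 0} =
      (⋃ i ∈ {i : ℕ | 1 ≤ i ∧ (D i).card = 2},
        {x : ℝ | ∃ z : ℤ, x = (Pprod p i : ℝ) * (2 * (z : ℝ) + 1) / (2 * (bOf D i : ℝ))}) ∪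
      (⋃ j ∈ {j : ℕ | 1 ≤ j ∧ (D j).card = 3},
        {x : ℝ | ∃ z : ℤ, ¬ (3 ∣ z) ∧ x = (Pprod p j : ℝ) * (z : ℝ) / 3}) ∪
      (⋃ m ∈ {m : ℕ | 1 ≤ m ∧ 3 < (D m).card},
        {x : ℝ | ∃ z : ℤ, ¬ (((D m).card : ℤ) ∣ z) ∧
          x = (Pprod p m : ℝ) * (z : ℝ) / ((D m).card : ℝ)}) := by
  exact zero_set_fourier_general p D μ (fun n hn => (zero_lt_one.trans (hp n hn)).ne')
    (fun _ hn => hT.isDigitShape hn) hμ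

end
end
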